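/- Define Γ(t) = ∫₀^t γ(s) ds and h(t) = e^{Γ(t)} ∫_t^∞ e^{−Γ(s)} ds for t ≥ 0. Then h(t) is asymptotically equivalent to 1/γ(t) as t → +∞, i.e. γ(t)·h(t) → 1 as t → +∞. -/

import Mathlib

open MeasureTheory Filter Real Set RealInnerProductSpace

open scoped Asymptotics Topology

/-!
Put `w = 1 / γ`, so that `Γ' = 1 / w` and `(e^{-Γ} w)' = e^{-Γ} (w' - 1)`. Whenever `w' → 0`, this
derivative is equivalent to `-e^{-Γ}`, and L'Hôpital's rule compares `∫_t^∞ e^{-Γ}` with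
`e^{-Γ(t)} w(t)`, provided the latter tends to `0`. That is automatic: `w' → 0` forces `w = o(t)`,
whence `t e^{-Γ(t)} w(t)` is eventually decreasing. For `γ(t) = c / (1 + t)^α` one has
`w'(t) = α (1 + t)^(α - 1) / c`, which tends to `0` because `α < 1`.
-/

section DerivativeAtInfinity

theorem isLittleO_id_of_hasDerivAt_of_tendsto_zero {E : Type*} [NormedAddCommGroup E]
    [NormedSpace ℝ E] {f f' : ℝ → E} (hf : ∀ᶠ t in atTop, HasDerivAt f (f' t) t)
    (hf' : Tendsto f' atTop (𝓝 0)) : f =o[atTop] (id : ℝ → ℝ) := by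
  refine Asymptotics.isLittleO_iff.2 fun ε hε => ?_
  have hsmall : ∀ᶠ t in atTop, ‖f' t‖ ≤ ε / 2 :=
    (hf'.norm.eventually_lt_const (by simpa using half_pos hε)).mono fun _ => le_of_lt
  obtain ⟨T, hT⟩ := eventually_atTop.1 (hf.and hsmall)
  have hlip : ∀ t ≥ T, ‖f t - f T‖ ≤ ε / 2 * ‖t - T‖ := fun t ht =>
    (convex_Ici T).norm_image_sub_le_of_norm_hasDerivWithin_le
      (fun s hs => (hT s hs).1.hasDerivWithinAt) (fun s hs => (hT s hs).2) self_mem_Ici ht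
  filter_upwards [eventually_ge_atTop T, eventually_ge_atTop 0,
    eventually_ge_atTop (2 / ε * (‖f T‖ + ε / 2 * |T|))] with t htT ht0 htlarge
  have hconst : ‖f T‖ + ε / 2 * |T| ≤ ε / 2 * t := by
    calc ‖f T‖ + ε / 2 * |T| = ε / 2 * (2 / ε * (‖f T‖ + ε / 2 * |T|)) := by field_simp
      _ ≤ ε / 2 * t := by gcongr
  calc ‖f t‖ ≤ ‖f T‖ + ‖f t - f T‖ := norm_le_norm_add_norm_sub' _ _
    _ ≤ ‖f T‖ + ε / 2 * (‖t‖ + ‖T‖) := by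
      gcongr
      exact (hlip t htT).trans (by gcongr; exact norm_sub_le t T)
    _ ≤ ε * ‖id t‖ := by
      rw [id, norm_of_nonneg ht0, Real.norm_eq_abs]
      linarith

theorem isBoundedUnder_le_of_hasDerivAt_nonpos {f f' : ℝ → ℝ}
    (hf : ∀ᶠ t in atTop, HasDerivAt f (f' t) t) (hf' : ∀ᶠ t in atTop, f' t ≤ 0) :
    IsBoundedUnder (· ≤ ·) atTop f := by
  obtain ⟨T, hT⟩ := eventually_atTop.1 (hf.and hf')
  have hanti : AntitoneOn f (Ici T) :=
    antitoneOn_of_hasDerivWithinAt_nonpos (convex_Ici T)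
      (fun t ht => (hT t ht).1.continuousAt.continuousWithinAt)
      (fun t ht => (hT t (interior_subset ht)).1.hasDerivWithinAt)
      (fun t ht => (hT t (interior_subset ht)).2)
  exact isBoundedUnder_of_eventually_le (a := f T)
    ((eventually_ge_atTop T).mono fun t ht => hanti self_mem_Ici ht ht)

end DerivativeAtInfinity

section TailIntegral

theorem hasDerivAt_integral_Ioi {E : Type*} [NormedAddCommGroup E] [NormedSpace ℝ E]
    [CompleteSpace E] {f : ℝ → E} {a t : ℝ} (hf : IntegrableOn f (Ioi a)) (hat : a < t)
    (hcont : ContinuousAt f t) : HasDerivAt (fun x => ∫ s in Ioi x, f s) (-f t) t := by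
  have hinterval : IntervalIntegrable f volume a t :=
    (intervalIntegrable_iff_integrableOn_Ioc_of_le hat.le).2 (hf.mono_set Ioc_subset_Ioi_self)
  have hmeas : StronglyMeasurableAtFilter f (𝓝 t) :=
    ⟨Ioi a, Ioi_mem_nhds hat, hf.aestronglyMeasurable⟩
  refine ((intervalIntegral.integral_hasDerivAt_right hinterval hmeas hcont).const_sub
    (∫ s in Ioi a, f s)).congr_of_eventuallyEq ?_
  filter_upwards [Ioi_mem_nhds hat] with x hx
  rw [← intervalIntegral.integral_Ioi_sub_Ioi hf (le_of_lt hx), sub_sub_cancel]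

variable {f F F' : ℝ → ℝ}

theorem integrableAtFilter_atTop_of_hasDerivAt_isEquivalent_neg
    (hf : ∀ᶠ t in atTop, ContinuousAt f t) (hpos : ∀ᶠ t in atTop, 0 < f t)
    (hF : ∀ᶠ t in atTop, HasDerivAt F (F' t) t) (hequiv : F' ~[atTop] fun t => -f t)
    (hlim : Tendsto F atTop (𝓝 0)) : IntegrableAtFilter f atTop := by
  have hneg : ∀ᶠ t in atTop, F' t ≤ 0 := by
    obtain ⟨u, hu, hFu⟩ := hequiv.exists_eq_mul
    filter_upwards [hpos, hFu, hu.eventually_const_lt one_pos] with t hft hFt hut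
    rw [hFt, Pi.mul_apply, mul_neg]
    exact neg_nonpos.2 (mul_pos hut hft).le
  have hF'int : IntegrableAtFilter F' atTop := by
    obtain ⟨T, hT⟩ := eventually_atTop.1 (hF.and hneg)
    exact ⟨Ioi T, Ioi_mem_atTop T, integrableOn_Ioi_deriv_of_nonpos' (fun t ht => (hT t ht).1)
      (fun t ht => (hT t (le_of_lt ht)).2) hlim⟩
  have hmeas : StronglyMeasurableAtFilter f atTop := by
    obtain ⟨T, hT⟩ := eventually_atTop.1 hf
    have hcontOn : ContinuousOn f (Ici T) := fun t ht => (hT t ht).continuousWithinAt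
    exact ⟨Ici T, Ici_mem_atTop T, hcontOn.aestronglyMeasurable measurableSet_Ici⟩
  exact (Asymptotics.isBigO_neg_left.1 hequiv.isBigO_symm).integrableAtFilter hmeas hF'int

theorem isEquivalent_integral_Ioi_of_hasDerivAt_isEquivalent_neg
    (hf : ∀ᶠ t in atTop, ContinuousAt f t) (hpos : ∀ᶠ t in atTop, 0 < f t)
    (hF : ∀ᶠ t in atTop, HasDerivAt F (F' t) t) (hequiv : F' ~[atTop] fun t => -f t)
    (hlim : Tendsto F atTop (𝓝 0)) : (fun t => ∫ s in Ioi t, f s) ~[atTop] F := by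
  have htail : ∀ᶠ t in atTop, HasDerivAt (fun x => ∫ s in Ioi x, f s) (-f t) t := by
    obtain ⟨S, hS, hint⟩ :=
      integrableAtFilter_atTop_of_hasDerivAt_isEquivalent_neg hf hpos hF hequiv hlim
    obtain ⟨a, ha⟩ := mem_atTop_sets.1 hS
    filter_upwards [hf, eventually_gt_atTop a] with t hft hat
    exact hasDerivAt_integral_Ioi (hint.mono_set fun s hs => ha s (le_of_lt hs)) hat hft
  have hF'_ne : ∀ᶠ t in atTop, F' t ≠ 0 := by
    filter_upwards [hequiv.isBigO_symm.eq_zero_imp, hpos] with t hzero hft hF't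
    exact (neg_neg_of_pos hft).ne (hzero hF't)
  exact Asymptotics.isEquivalent_of_tendsto_one
    (HasDerivAt.lhopital_zero_atTop htail hF hF'_ne (tendsto_integral_Ioi_zero tendsto_id) hlim
      ((Asymptotics.isEquivalent_iff_tendsto_one hF'_ne).1 hequiv.symm))

end TailIntegral

section ExpNeg

variable {Γ w w' : ℝ → ℝ}

theorem hasDerivAt_exp_neg_mul {d t : ℝ} (hΓ : HasDerivAt Γ (w t)⁻¹ t) (hw : HasDerivAt w d t)
    (hwt : w t ≠ 0) : HasDerivAt (fun s => exp (-Γ s) * w s) (exp (-Γ t) * (d - 1)) t := by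
  refine (hΓ.fun_neg.exp.mul hw).congr_deriv ?_
  field_simp
  ring

theorem tendsto_exp_neg_mul_zero (hΓ : ∀ᶠ t in atTop, HasDerivAt Γ (w t)⁻¹ t)
    (hw : ∀ᶠ t in atTop, HasDerivAt w (w' t) t) (hpos : ∀ᶠ t in atTop, 0 < w t)
    (hw' : Tendsto w' atTop (𝓝 0)) : Tendsto (fun t => exp (-Γ t) * w t) atTop (𝓝 0) := by
  have hderiv : ∀ᶠ t in atTop, HasDerivAt (fun s => s * (exp (-Γ s) * w s))
      (exp (-Γ t) * (w t + t * (w' t - 1))) t := by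
    filter_upwards [hΓ, hw, hpos] with t hΓt hwt hpt
    refine ((hasDerivAt_id' t).mul (hasDerivAt_exp_neg_mul hΓt hwt hpt.ne')).congr_deriv ?_
    ring
  have hnonpos : ∀ᶠ t in atTop, exp (-Γ t) * (w t + t * (w' t - 1)) ≤ 0 := by
    have hwt_le := (isLittleO_id_of_hasDerivAt_of_tendsto_zero hw hw').bound one_half_pos
    filter_upwards [hwt_le, hw'.eventually_lt_const one_half_pos, eventually_ge_atTop 0]
      with t hwt hw't ht
    rw [id, norm_of_nonneg ht] at hwt
    have hw't_mul : t * w' t ≤ t * (1 / 2) := by gcongr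
    exact mul_nonpos_of_nonneg_of_nonpos (exp_pos _).le (by linarith [le_norm_self (w t)])
  obtain ⟨C, hC⟩ := (isBoundedUnder_le_of_hasDerivAt_nonpos hderiv hnonpos).eventually_le
  refine squeeze_zero' (hpos.mono fun t hpt => by positivity) ?_ (tendsto_id.const_div_atTop C)
  filter_upwards [hC, eventually_gt_atTop 0] with t hCt ht
  exact (le_div_iff₀' ht).2 hCt

theorem isEquivalent_integral_Ioi_exp_neg (hΓ : ∀ᶠ t in atTop, HasDerivAt Γ (w t)⁻¹ t)
    (hw : ∀ᶠ t in atTop, HasDerivAt w (w' t) t) (hpos : ∀ᶠ t in atTop, 0 < w t)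
    (hw' : Tendsto w' atTop (𝓝 0)) :
    (fun t => ∫ s in Ioi t, exp (-Γ s)) ~[atTop] fun t => exp (-Γ t) * w t := by
  have hderiv : ∀ᶠ t in atTop,
      HasDerivAt (fun s => exp (-Γ s) * w s) (exp (-Γ t) * (w' t - 1)) t := by
    filter_upwards [hΓ, hw, hpos] with t hΓt hwt hpt
    exact hasDerivAt_exp_neg_mul hΓt hwt hpt.ne'
  have hequiv : (fun t => exp (-Γ t) * (w' t - 1)) ~[atTop] fun t => -exp (-Γ t) := by
    have hratio : Tendsto (fun t => 1 - w' t) atTop (𝓝 1) := by simpa using hw'.const_sub 1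
    refine Asymptotics.isEquivalent_of_tendsto_one (hratio.congr fun t => ?_)
    simp only [Pi.div_apply]
    field_simp
    ring
  exact isEquivalent_integral_Ioi_of_hasDerivAt_isEquivalent_neg
    (hΓ.mono fun t hΓt => hΓt.continuousAt.neg.rexp) (.of_forall fun t => exp_pos _)
    hderiv hequiv (tendsto_exp_neg_mul_zero hΓ hw hpos hw')

theorem tendsto_inv_mul_exp_mul_integral_Ioi_exp_neg
    (hΓ : ∀ᶠ t in atTop, HasDerivAt Γ (w t)⁻¹ t)
    (hw : ∀ᶠ t in atTop, HasDerivAt w (w' t) t) (hpos : ∀ᶠ t in atTop, 0 < w t)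
    (hw' : Tendsto w' atTop (𝓝 0)) :
    Tendsto (fun t => (w t)⁻¹ * (exp (Γ t) * ∫ s in Ioi t, exp (-Γ s))) atTop (𝓝 1) := by
  have hne : ∀ᶠ t in atTop, exp (-Γ t) * w t ≠ 0 := hpos.mono fun t hpt => by positivity
  refine ((Asymptotics.isEquivalent_iff_tendsto_one hne).1
    (isEquivalent_integral_Ioi_exp_neg hΓ hw hpos hw')).congr fun t => ?_
  rw [Pi.div_apply, exp_neg]
  field_simp

end ExpNeg

section PowerDamping

theorem hasDerivAt_integral_div_one_add_rpow (c α : ℝ) {t : ℝ} (ht : -1 < t) :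
    HasDerivAt (fun x => ∫ s in (0 : ℝ)..x, c / (1 + s) ^ α) (c / (1 + t) ^ α) t := by
  have hcont : ContinuousOn (fun s : ℝ => c / (1 + s) ^ α) (Ioi (-1)) := fun s hs => by
    have hs_pos : 0 < 1 + s := neg_lt_iff_pos_add'.1 hs
    exact (continuousAt_const.div ((continuousAt_const.add continuousAt_id).rpow_const
      (.inl hs_pos.ne')) (rpow_pos_of_pos hs_pos α).ne').continuousWithinAt
  have hsub : uIcc 0 t ⊆ Ioi (-1) := ordConnected_Ioi.uIcc_subset neg_one_lt_zero ht
  exact intervalIntegral.integral_hasDerivAt_right (hcont.mono hsub).intervalIntegrable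
    ⟨_, Ioi_mem_nhds ht, hcont.aestronglyMeasurable measurableSet_Ioi⟩
    (hcont.continuousAt (Ioi_mem_nhds ht))

theorem hasDerivAt_one_add_rpow_div (c α : ℝ) {t : ℝ} (ht : -1 < t) :
    HasDerivAt (fun s : ℝ => (1 + s) ^ α / c) (α * (1 + t) ^ (α - 1) / c) t := by
  have ht_ne : 1 + t ≠ 0 := (neg_lt_iff_pos_add'.1 ht).ne'
  simpa using (((hasDerivAt_id' t).const_add 1).rpow_const (p := α) (.inl ht_ne)).div_const c

theorem tendsto_mul_one_add_rpow_sub_one_div_zero (c : ℝ) {α : ℝ} (hα : α < 1) :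
    Tendsto (fun t : ℝ => α * (1 + t) ^ (α - 1) / c) atTop (𝓝 0) := by
  have hrpow : Tendsto (fun t : ℝ => (1 + t) ^ (α - 1)) atTop (𝓝 0) := by
    simpa [Function.comp_def] using (tendsto_rpow_neg_atTop (sub_pos.2 hα)).comp
      (tendsto_atTop_add_const_left atTop (1 : ℝ) tendsto_id)
  simpa using (hrpow.const_mul α).div_const c

end PowerDamping

theorem h_asymptotic_equiv_general (c α : ℝ) (hc : 0 < c) (hα : α < 1) :
    Tendsto
      (fun t : ℝ => (c / (1 + t) ^ α) *
        (exp (∫ s in (0 : ℝ)..t, c / (1 + s) ^ α) *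
          ∫ s in Ioi t, exp (-(∫ u in (0 : ℝ)..s, c / (1 + u) ^ α))))
      atTop (𝓝 1) := by
  have hΓ : ∀ᶠ t : ℝ in atTop, HasDerivAt (fun x => ∫ s in (0 : ℝ)..x, c / (1 + s) ^ α)
      ((1 + t) ^ α / c)⁻¹ t := by
    filter_upwards [eventually_gt_atTop (-1)] with t ht
    simpa only [inv_div] using hasDerivAt_integral_div_one_add_rpow c α ht
  have hw : ∀ᶠ t : ℝ in atTop,
      HasDerivAt (fun s : ℝ => (1 + s) ^ α / c) (α * (1 + t) ^ (α - 1) / c) t :=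
    (eventually_gt_atTop (-1)).mono fun t ht => hasDerivAt_one_add_rpow_div c α ht
  have hpos : ∀ᶠ t : ℝ in atTop, 0 < (1 + t) ^ α / c := by
    filter_upwards [eventually_ge_atTop 0] with t ht
    positivity
  simpa only [inv_div] using tendsto_inv_mul_exp_mul_integral_Ioi_exp_neg hΓ hw hpos
    (tendsto_mul_one_add_rpow_sub_one_div_zero c hα)

theorem h_asymptotic_equiv
    (c α : ℝ) (hc : 0 < c) (hα0 : 0 ≤ α) (hα1 : α < 1) :
    Tendsto
      (fun t : ℝ => (c / (1 + t) ^ α) *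
        (Real.exp (∫ s in (0:ℝ)..t, c / (1 + s) ^ α) *
          ∫ s in Ioi t, Real.exp (-(∫ u in (0:ℝ)..s, c / (1 + u) ^ α))))
      atTop (nhds 1) :=
  h_asymptotic_equiv_general c α hc hα1
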